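/- In the walk (OTW) model, the probability of a contact above the axis at site 2i is ⟨â_i⟩_n = (z₁z₂)^i Z̃_i(z₁) Z_{n-i}(z₁,z₂)/Z_n(z₁,z₂), and in the thermodynamic limit with i = xn, 0 < x < 1, the pair (⟨â_x⟩, ⟨b̂_x⟩) of contact probabilities above/below converges to (0,0) when z₁,z₂ > 1/2, to (ρ(z₁),0) when z₁ < 1/2 < z₂ (z₂ > z₁), and to (0,ρ(z₂)) when z₂ < 1/2, z₁ > z₂, where ρ(z) = (1-2z)/(1-z). -/

import Mathlib

open Filter

/-- Ballot number B_{m,q}, with B_{0,0} = 1 and B_{m,q} = 0 for q > m. -/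
noncomputable def Bq (m q : ℕ) : ℝ :=
  if m = 0 then (if q = 0 then 1 else 0)
  else if q ≤ m then
    (q : ℝ) * (2 * m - q - 1).factorial / ((m.factorial : ℝ) * (m - q).factorial)
  else 0

/-- One-sided contact generating function Z̃_m(z) = ∑_q B_{m,q} z^{-q}. -/
noncomputable def Zt (m : ℕ) (z : ℝ) : ℝ := ∑ q ∈ Finset.range (m + 1), Bq m q * z⁻¹ ^ q

/-- One-transit walk model partition function Z_n(z₁,z₂). -/
noncomputable def Zfull (n : ℕ) (z₁ z₂ : ℝ) : ℝ :=
  (z₁ * z₂) ^ n * ∑ p ∈ Finset.range (n + 1), Zt p z₁ * Zt (n - p) z₂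

/-- Probability of a contact above the axis at site 2i. -/
noncomputable def contactAbove (n i : ℕ) (z₁ z₂ : ℝ) : ℝ :=
  (z₁ * z₂) ^ i * Zt i z₁ * Zfull (n - i) z₁ z₂ / Zfull n z₁ z₂

/-- Probability of a contact below the axis at site 2i. -/
noncomputable def contactBelow (n i : ℕ) (z₁ z₂ : ℝ) : ℝ :=
  (z₁ * z₂) ^ (n - i) * Zfull i z₁ z₂ * Zt (n - i) z₂ / Zfull n z₁ z₂

/-!
The recursion of the ballot numbers telescopes to `Z̃_m(z) wᵐ = 1 - z ∑_{k<m} C_k wᵏ`, where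
`w = z(1 - z)` and `C_k` is the Catalan number. Since `z` and `1 - z` share the same `w`, and
`Z̃_m(v) = O(C_m)` for `v > 1/2`, the identity at `1 - z` evaluates the Catalan series for
`z < 1/2`, and then the identity at `z` gives `Z̃_m(z) wᵐ → ρ(z)`.

If both weights exceed `1/2`, every partition function is comparable to a Catalan number, and
`C_i C_j / C_{i+j}` tends to `0`. If the smaller weight `z` is below `1/2`, the convolution of the
two sequences `Z̃_p(z₁)` and `Z̃_p(z₂)` grows exactly like `w⁻ⁿ`; it cancels in the contact
probability and leaves the limit of `Z̃_i(z₁) wⁱ`.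
-/

open Finset.HasAntidiagonal (antidiagonal mem_antidiagonal)

lemma tendsto_sum_antidiagonal_mul {R : Type*} [NormedRing R] [CompleteSpace R] {a b : ℕ → R}
    {α : R} (ha : Tendsto a atTop (nhds α)) (hb : Summable fun n => ‖b n‖) :
    Tendsto (fun n => ∑ p ∈ antidiagonal n, a p.1 * b p.2) atTop
      (nhds (α * ∑' k, b k)) := by
  obtain ⟨M, hM⟩ := ha.norm.bddAbove_range
  have norm_le_M (n : ℕ) : ‖a n‖ ≤ M := hM ⟨n, rfl⟩
  have sum_eq_tsum (n : ℕ) : ∑ p ∈ antidiagonal n, a p.1 * b p.2 =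
      ∑' k, if k ≤ n then a (n - k) * b k else 0 := by
    rw [← Finset.Nat.sum_antidiagonal_swap, Finset.Nat.sum_antidiagonal_eq_sum_range_succ_mk,
      tsum_eq_sum (s := Finset.range (n + 1))]
    · exact Finset.sum_congr rfl fun k hk => (if_pos (by simpa [Nat.lt_succ_iff] using hk)).symm
    · exact fun k hk => if_neg (by simpa [Nat.lt_succ_iff] using hk)
  rw [← hb.of_norm.tsum_mul_left]
  simp_rw [sum_eq_tsum]
  refine tendsto_tsum_of_dominated_convergence (hb.mul_left M) (fun k => ?_)
    (.of_forall fun n k => ?_)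
  · refine ((ha.comp (tendsto_sub_atTop_nat k)).mul_const (b k)).congr' ?_
    filter_upwards [eventually_ge_atTop k] with n hn
    simp [hn]
  · split_ifs
    · exact (norm_mul_le _ _).trans (by gcongr; exact norm_le_M _)
    · rw [norm_zero]
      exact mul_nonneg ((norm_nonneg _).trans (norm_le_M 0)) (norm_nonneg _)

section Catalan

lemma add_two_mul_catalan_succ (n : ℕ) :
    (n + 2) * catalan (n + 1) = 2 * (2 * n + 1) * catalan n := by
  refine Nat.eq_of_mul_eq_mul_left n.succ_pos ?_
  calc (n + 1) * ((n + 2) * catalan (n + 1)) = (n + 1) * (n + 1).centralBinom := by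
        rw [← succ_mul_catalan_eq_centralBinom]
    _ = 2 * (2 * n + 1) * ((n + 1) * catalan n) := by
        rw [Nat.succ_mul_centralBinom_succ, succ_mul_catalan_eq_centralBinom]
    _ = (n + 1) * (2 * (2 * n + 1) * catalan n) := by ring

lemma catalan_pos (n : ℕ) : 0 < catalan n :=
  Nat.pos_of_mul_pos_left (succ_mul_catalan_eq_centralBinom n ▸ n.centralBinom_pos)

lemma catalan_le_catalan_succ (n : ℕ) : catalan n ≤ catalan (n + 1) := by
  nlinarith [add_two_mul_catalan_succ n]

lemma catalan_succ_le (n : ℕ) : catalan (n + 1) ≤ 4 * catalan n := by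
  nlinarith [add_two_mul_catalan_succ n]

lemma centralBinom_mul_centralBinom_le (i j : ℕ) :
    i.centralBinom * j.centralBinom ≤ (i + j).centralBinom := by
  simp only [Nat.centralBinom_eq_two_mul_choose]
  rw [mul_add, Nat.add_choose_eq]
  exact Finset.single_le_sum (f := fun p : ℕ × ℕ => (2 * i).choose p.1 * (2 * j).choose p.2)
    (fun _ _ => Nat.zero_le _) (a := (i, j)) (by simp)

lemma catalan_mul_catalan_le (i j : ℕ) : (catalan i : ℝ) * catalan j ≤
    (1 / ((i : ℝ) + 1) + 1 / ((j : ℝ) + 1)) * catalan (i + j) := by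
  have h : ((i + 1) * catalan i) * ((j + 1) * catalan j) ≤ (i + j + 1) * catalan (i + j) := by
    simpa only [succ_mul_catalan_eq_centralBinom] using centralBinom_mul_centralBinom_le i j
  have h_real : ((i + 1) * catalan i) * ((j + 1) * catalan j) ≤
      ((i : ℝ) + j + 1) * catalan (i + j) := by exact_mod_cast h
  rw [div_add_div _ _ (by positivity) (by positivity), div_mul_eq_mul_div,
    le_div_iff₀ (by positivity)]
  linarith [(catalan (i + j)).cast_nonneg (α := ℝ)]

lemma tendsto_catalan_mul_catalan_div : Tendsto
    (fun p : ℕ × ℕ => (catalan p.1 : ℝ) * catalan p.2 / catalan (p.1 + p.2)) atTop (nhds 0) := by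
  have h_inv := tendsto_one_div_add_atTop_nhds_zero_nat (𝕜 := ℝ)
  have h_bound : Tendsto (fun p : ℕ × ℕ => 1 / ((p.1 : ℝ) + 1) + 1 / ((p.2 : ℝ) + 1))
      atTop (nhds 0) := by
    rw [← prod_atTop_atTop_eq]
    simpa using (h_inv.comp tendsto_fst).add (h_inv.comp tendsto_snd)
  refine squeeze_zero (fun p => by positivity) (fun p => ?_) h_bound
  rw [div_le_iff₀ (by exact_mod_cast catalan_pos _)]
  exact catalan_mul_catalan_le _ _

end Catalan

section Ballot

lemma Bq_nonneg (m q : ℕ) : 0 ≤ Bq m q := by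
  unfold Bq
  split_ifs <;> positivity

lemma Bq_of_lt {m q : ℕ} (h : m < q) : Bq m q = 0 := by
  grind [Bq]

lemma Bq_succ_zero (m : ℕ) : Bq (m + 1) 0 = 0 := by
  simp [Bq]

lemma Bq_add (q r : ℕ) (h : q + r ≠ 0) : Bq (q + r) q =
    q * (q + 2 * r).factorial / ((q + 2 * r) * ((q + r).factorial * r.factorial)) := by
  have h_ne : q + 2 * r ≠ 0 := by lia
  have h_ne_real : (q : ℝ) + 2 * r ≠ 0 := by exact_mod_cast h_ne
  have h_index : 2 * (q + r) - q - 1 = q + 2 * r - 1 := by lia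
  rw [Bq, if_neg h, if_pos (Nat.le_add_right q r), h_index, Nat.add_sub_cancel_left,
    ← Nat.mul_factorial_pred h_ne]
  push_cast
  field_simp

lemma Bq_self (m : ℕ) : Bq m m = 1 := by
  rcases eq_or_ne m 0 with rfl | hm
  · simp [Bq]
  · have h := Bq_add m 0 (by simpa using hm)
    have : (m : ℝ) ≠ 0 := by exact_mod_cast hm
    have := m.factorial_ne_zero
    simp only [add_zero, mul_zero, Nat.factorial_zero, Nat.cast_zero, Nat.cast_one] at h
    rw [h]
    field_simp

lemma Bq_succ_one (m : ℕ) : Bq (m + 1) 1 = catalan m := by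
  have h := Bq_add 1 m (by lia)
  have h_catalan : ((m : ℝ) + 1) * catalan m = m.centralBinom := by
    exact_mod_cast succ_mul_catalan_eq_centralBinom m
  have h_factorial : (m.centralBinom : ℝ) * m.factorial * m.factorial = (2 * m).factorial := by
    have := Nat.choose_mul_factorial_mul_factorial (show m ≤ 2 * m by lia)
    rw [show 2 * m - m = m by lia, ← Nat.centralBinom_eq_two_mul_choose] at this
    exact_mod_cast this
  rw [add_comm 1 m, add_comm 1 (2 * m), Nat.factorial_succ, Nat.factorial_succ] at h
  push_cast at h
  rw [h, ← h_factorial, ← h_catalan]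
  field_simp
  ring

lemma Bq_succ_succ (m q : ℕ) : Bq (m + 1) (q + 1) = Bq (m + 1) (q + 2) + Bq m q := by
  rcases lt_trichotomy m q with h | rfl | h
  · simp [Bq_of_lt h, Bq_of_lt (show m + 1 < q + 1 by lia), Bq_of_lt (show m + 1 < q + 2 by lia)]
  · simp [Bq_self, Bq_of_lt (show m + 1 < m + 2 by lia)]
  · obtain ⟨r, rfl⟩ : ∃ r, m = q + (r + 1) := ⟨m - q - 1, by lia⟩
    have h₁ := Bq_add (q + 1) (r + 1) (by lia)
    have h₂ := Bq_add (q + 2) r (by lia)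
    have h₃ := Bq_add q (r + 1) (by lia)
    rw [show q + 1 + (r + 1) = q + (r + 1) + 1 by ring,
      show q + 1 + 2 * (r + 1) = q + 2 * (r + 1) + 1 by ring] at h₁
    rw [show q + 2 + r = q + (r + 1) + 1 by ring,
      show q + 2 + 2 * r = q + 2 * (r + 1) by ring] at h₂
    rw [h₁, h₂, h₃]
    simp only [Nat.factorial_succ (q + (r + 1)), Nat.factorial_succ (q + 2 * (r + 1)),
      Nat.factorial_succ r]
    push_cast
    field_simp
    ring

lemma two_mul_mul_Bq_succ_le {m q : ℕ} (hq : q ≠ 0) :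
    2 * (q : ℝ) * Bq m (q + 1) ≤ (q + 1) * Bq m q := by
  rcases le_or_gt m q with h | h
  · rw [Bq_of_lt (Nat.lt_succ_of_le h), mul_zero]
    exact mul_nonneg (by positivity) (Bq_nonneg m q)
  · obtain ⟨r, rfl⟩ : ∃ r, m = q + (r + 1) := ⟨m - q - 1, by lia⟩
    have h_ratio : (q : ℝ) * (q + 2 * r + 1) * Bq (q + (r + 1)) (q + 1) =
        (q + 1) * (r + 1) * Bq (q + (r + 1)) q := by
      have h₁ := Bq_add q (r + 1) (by lia)
      have h₂ := Bq_add (q + 1) r (by lia)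
      rw [show q + 1 + r = q + (r + 1) by ring] at h₂
      rw [h₁, h₂, show q + 2 * (r + 1) = q + 1 + 2 * r + 1 by ring,
        Nat.factorial_succ (q + 1 + 2 * r), Nat.factorial_succ r]
      push_cast
      field_simp
      ring
    have h_half : 2 * ((r : ℝ) + 1) ≤ q + 2 * r + 1 := by
      have : (1 : ℝ) ≤ q := by exact_mod_cast Nat.one_le_iff_ne_zero.2 hq
      linarith
    refine le_of_mul_le_mul_left ?_ (show (0 : ℝ) < q + 2 * r + 1 by positivity)
    calc ((q : ℝ) + 2 * r + 1) * (2 * q * Bq (q + (r + 1)) (q + 1))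
        = (2 * (r + 1)) * ((q + 1) * Bq (q + (r + 1)) q) := by linear_combination 2 * h_ratio
      _ ≤ (q + 2 * r + 1) * ((q + 1) * Bq (q + (r + 1)) q) := by
        have := Bq_nonneg (q + (r + 1)) q
        gcongr

lemma Bq_succ_succ_le (m q : ℕ) :
    Bq (m + 1) (q + 1) ≤ (q + 1) * (1 / 2) ^ q * catalan m := by
  induction q with
  | zero => simp [Bq_succ_one]
  | succ q ih =>
    refine le_of_mul_le_mul_left ?_ (show (0 : ℝ) < 2 * (q + 1) by positivity)
    calc 2 * ((q : ℝ) + 1) * Bq (m + 1) (q + 2) ≤ (q + 2) * Bq (m + 1) (q + 1) := by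
          have := two_mul_mul_Bq_succ_le (m := m + 1) q.succ_ne_zero
          push_cast at this
          linarith
      _ ≤ (q + 2) * ((q + 1) * (1 / 2) ^ q * catalan m) := by gcongr
      _ = 2 * (q + 1) * (((q + 1 : ℕ) + 1) * (1 / 2) ^ (q + 1) * catalan m) := by
          push_cast
          ring

lemma Bq_le (m q : ℕ) : Bq m q ≤ (2 * q + 1) * (1 / 2) ^ q * catalan m := by
  rcases m with _ | m <;> rcases q with _ | q
  · simp [Bq]
  · rw [Bq_of_lt q.succ_pos]
    positivity
  · rw [Bq_succ_zero]
    positivity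
  · calc Bq (m + 1) (q + 1) ≤ (2 * (q + 1)) * (1 / 2) ^ (q + 1) * catalan m :=
          (Bq_succ_succ_le m q).trans_eq (by ring)
      _ ≤ (2 * (q + 1 : ℕ) + 1) * (1 / 2) ^ (q + 1) * catalan (m + 1) := by
          gcongr
          · push_cast
            linarith
          · exact catalan_le_catalan_succ m

end Ballot

section OneSided

lemma Zt_zero (z : ℝ) : Zt 0 z = 1 := by
  simp [Zt, Bq]

lemma Zt_succ (m : ℕ) (z : ℝ) :
    Zt (m + 1) z = ∑ q ∈ Finset.range (m + 1), Bq (m + 1) (q + 1) * z⁻¹ ^ (q + 1) := by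
  rw [Zt, Finset.sum_range_succ', Bq_succ_zero, zero_mul, add_zero]

lemma Zt_pos (m : ℕ) {z : ℝ} (hz : 0 < z) : 0 < Zt m z :=
  Finset.sum_pos' (fun q _ => mul_nonneg (Bq_nonneg m q) (by positivity))
    ⟨m, by simp, by rw [Bq_self]; positivity⟩

lemma Zt_anti (m : ℕ) {z v : ℝ} (hz : 0 < z) (hzv : z ≤ v) : Zt m v ≤ Zt m z := by
  unfold Zt
  gcongr with q
  · exact Bq_nonneg m q
  · exact inv_nonneg.2 (hz.le.trans hzv)

lemma one_sub_mul_Zt_succ (m : ℕ) {z : ℝ} (hz : z ≠ 0) :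
    (1 - z) * Zt (m + 1) z = z⁻¹ * Zt m z - catalan m := by
  set S := ∑ q ∈ Finset.range (m + 1), Bq (m + 1) (q + 2) * z⁻¹ ^ (q + 1) with hS
  have Zt_eq : Zt (m + 1) z = S + z⁻¹ * Zt m z := by
    rw [Zt_succ, hS, Zt, Finset.mul_sum, ← Finset.sum_add_distrib]
    refine Finset.sum_congr rfl fun q _ => ?_
    rw [Bq_succ_succ]
    ring
  have mul_Zt_eq : z * Zt (m + 1) z = S + catalan m := by
    calc z * Zt (m + 1) z = ∑ q ∈ Finset.range (m + 1), Bq (m + 1) (q + 1) * z⁻¹ ^ q := by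
          rw [Zt_succ, Finset.mul_sum]
          refine Finset.sum_congr rfl fun q _ => ?_
          rw [pow_succ]
          field_simp
      _ = ∑ q ∈ Finset.range (m + 2), Bq (m + 1) (q + 1) * z⁻¹ ^ q := by
          rw [Finset.sum_range_succ _ (m + 1), Bq_of_lt (Nat.lt_succ_self _), zero_mul, add_zero]
      _ = S + catalan m := by
          rw [Finset.sum_range_succ', zero_add, Bq_succ_one, pow_zero, mul_one]
  linear_combination Zt_eq - mul_Zt_eq

lemma Zt_mul_pow_eq (m : ℕ) {z : ℝ} (hz : z ≠ 0) : Zt m z * (z * (1 - z)) ^ m =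
    1 - z * ∑ k ∈ Finset.range m, (catalan k : ℝ) * (z * (1 - z)) ^ k := by
  induction m with
  | zero => simp [Zt_zero]
  | succ m ih =>
    rw [Finset.sum_range_succ, pow_succ]
    linear_combination z * (z * (1 - z)) ^ m * one_sub_mul_Zt_succ m hz + ih +
      Zt m z * (z * (1 - z)) ^ m * mul_inv_cancel₀ hz

lemma Zt_mul_pow_le_one (m : ℕ) {z : ℝ} (hz0 : 0 < z) (hz1 : z < 1) :
    Zt m z * (z * (1 - z)) ^ m ≤ 1 := by
  have : 0 < 1 - z := sub_pos.2 hz1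
  rw [Zt_mul_pow_eq m hz0.ne', sub_le_self_iff]
  positivity

lemma exists_Zt_le_mul_catalan {z : ℝ} (hz : 1 / 2 < z) :
    ∃ K : ℝ, ∀ m, Zt m z ≤ K * catalan m := by
  have : 0 < z := by linarith
  set r : ℝ := (2 * z)⁻¹ with hr
  have hr0 : 0 < r := by positivity
  have hr1 : r < 1 := inv_lt_one_of_one_lt₀ (by linarith)
  have h_summable : Summable fun q : ℕ => (2 * (q : ℝ) + 1) * r ^ q := by
    have h_norm : ‖r‖ < 1 := by rwa [Real.norm_of_nonneg hr0.le]
    simpa [add_mul, mul_assoc] using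
      ((summable_pow_mul_geometric_of_norm_lt_one 1 h_norm).mul_left 2).add
        (summable_geometric_of_norm_lt_one h_norm)
  refine ⟨∑' q : ℕ, (2 * (q : ℝ) + 1) * r ^ q, fun m => ?_⟩
  calc Zt m z ≤ ∑ q ∈ Finset.range (m + 1), (2 * q + 1) * (1 / 2) ^ q * catalan m * z⁻¹ ^ q := by
        unfold Zt
        gcongr with q
        exact Bq_le m q
    _ = (∑ q ∈ Finset.range (m + 1), (2 * (q : ℝ) + 1) * r ^ q) * catalan m := by
        rw [Finset.sum_mul]
        refine Finset.sum_congr rfl fun q _ => ?_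
        rw [hr, mul_inv, mul_pow, one_div]
        ring
    _ ≤ (∑' q : ℕ, (2 * (q : ℝ) + 1) * r ^ q) * catalan m := by
        gcongr
        exact h_summable.sum_le_tsum _ fun q _ => by positivity

lemma exists_mul_catalan_le_Zt {z : ℝ} (hz : 0 < z) :
    ∃ c : ℝ, 0 < c ∧ ∀ m, c * catalan m ≤ Zt m z := by
  refine ⟨min 1 (z⁻¹ / 4), by positivity, fun m => ?_⟩
  cases m with
  | zero => simp [Zt_zero]
  | succ m =>
    calc min 1 (z⁻¹ / 4) * (catalan (m + 1) : ℝ) ≤ z⁻¹ / 4 * (4 * catalan m) := by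
          gcongr
          · exact min_le_right _ _
          · exact_mod_cast catalan_succ_le m
      _ = Bq (m + 1) (0 + 1) * z⁻¹ ^ (0 + 1) := by
          rw [zero_add, Bq_succ_one]
          ring
      _ ≤ Zt (m + 1) z := by
          rw [Zt_succ]
          exact Finset.single_le_sum (f := fun q => Bq (m + 1) (q + 1) * z⁻¹ ^ (q + 1))
            (fun q _ => mul_nonneg (Bq_nonneg _ _) (by positivity)) (by simp)

lemma hasSum_catalan_mul_pow {z : ℝ} (hz : 1 / 2 < z) (hz1 : z < 1) :
    HasSum (fun k => (catalan k : ℝ) * (z * (1 - z)) ^ k) z⁻¹ := by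
  have hz0 : 0 < z := by linarith
  have : 0 < z * (1 - z) := mul_pos hz0 (sub_pos.2 hz1)
  have h_partial (m : ℕ) : ∑ k ∈ Finset.range m, (catalan k : ℝ) * (z * (1 - z)) ^ k =
      z⁻¹ * (1 - Zt m z * (z * (1 - z)) ^ m) := by
    rw [Zt_mul_pow_eq m hz0.ne', sub_sub_cancel, inv_mul_cancel_left₀ hz0.ne']
  have h_summable : Summable fun k => (catalan k : ℝ) * (z * (1 - z)) ^ k := by
    refine summable_of_sum_range_le (c := z⁻¹) (fun k => by positivity) fun m => ?_
    rw [h_partial]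
    refine mul_le_of_le_one_right (by positivity) (sub_le_self _ ?_)
    exact mul_nonneg (Zt_pos m hz0).le (by positivity)
  have h_remainder : Tendsto (fun m => Zt m z * (z * (1 - z)) ^ m) atTop (nhds 0) := by
    obtain ⟨K, hK⟩ := exists_Zt_le_mul_catalan hz
    refine squeeze_zero (fun m => mul_nonneg (Zt_pos m hz0).le (by positivity)) (fun m => ?_)
      (by simpa using h_summable.tendsto_atTop_zero.const_mul K)
    rw [← mul_assoc]
    gcongr
    exact hK m
  rw [h_summable.hasSum_iff_tendsto_nat]
  simp_rw [h_partial]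
  simpa using (h_remainder.const_sub 1).const_mul z⁻¹

lemma tendsto_Zt_mul_pow {z : ℝ} (hz0 : 0 < z) (hz : z < 1 / 2) :
    Tendsto (fun m => Zt m z * (z * (1 - z)) ^ m) atTop (nhds ((1 - 2 * z) / (1 - z))) := by
  have h_sum : HasSum (fun k => (catalan k : ℝ) * (z * (1 - z)) ^ k) (1 - z)⁻¹ := by
    simpa [mul_comm] using hasSum_catalan_mul_pow (z := 1 - z) (by linarith) (by linarith)
  have h_limit : 1 - z * (1 - z)⁻¹ = (1 - 2 * z) / (1 - z) := by
    have : 1 - z ≠ 0 := by linarith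
    field_simp
    ring
  simp_rw [Zt_mul_pow_eq _ hz0.ne', ← h_limit]
  exact (h_sum.tendsto_sum_nat.const_mul z).const_sub 1

lemma summable_Zt_mul_pow {z v : ℝ} (hz0 : 0 < z) (hz : z < 1 / 2) (hzv : z < v) :
    Summable fun m => Zt m v * (z * (1 - z)) ^ m := by
  obtain ⟨u, hzu, hu⟩ := exists_between (lt_min hzv hz)
  obtain ⟨huv, hu_half⟩ := lt_min_iff.1 hu
  have hu0 : 0 < u := hz0.trans hzu
  have hw : 0 < z * (1 - z) := mul_pos hz0 (by linarith)
  have hw_lt : z * (1 - z) < u * (1 - u) := by nlinarith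
  have hwu : 0 < u * (1 - u) := hw.trans hw_lt
  refine (summable_geometric_of_lt_one (by positivity) ((div_lt_one hwu).2 hw_lt)).of_nonneg_of_le
    (fun m => mul_nonneg (Zt_pos m (hz0.trans hzv)).le (by positivity)) fun m => ?_
  rw [div_pow, le_div_iff₀ (by positivity)]
  calc Zt m v * (z * (1 - z)) ^ m * (u * (1 - u)) ^ m
      = (Zt m v * (u * (1 - u)) ^ m) * (z * (1 - z)) ^ m := by ring
    _ ≤ (Zt m u * (u * (1 - u)) ^ m) * (z * (1 - z)) ^ m := by
        gcongr
        exact Zt_anti m hu0 huv.le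
    _ ≤ (z * (1 - z)) ^ m :=
        mul_le_of_le_one_left (by positivity) (Zt_mul_pow_le_one m hu0 (by linarith))

end OneSided

section TwoSided

/-- The convolution of the one-sided generating functions above and below the axis: the partition
function `Z_n(z₁, z₂)` without its normalisation `(z₁ z₂)^n`, which cancels in the contact
probabilities. -/
noncomputable def ZtConv (n : ℕ) (z₁ z₂ : ℝ) : ℝ :=
  ∑ p ∈ antidiagonal n, Zt p.1 z₁ * Zt p.2 z₂

lemma Zfull_eq_pow_mul_ZtConv (n : ℕ) (z₁ z₂ : ℝ) :
    Zfull n z₁ z₂ = (z₁ * z₂) ^ n * ZtConv n z₁ z₂ := by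
  rw [Zfull, ZtConv, Finset.Nat.sum_antidiagonal_eq_sum_range_succ_mk]

lemma ZtConv_comm (n : ℕ) (z₁ z₂ : ℝ) : ZtConv n z₁ z₂ = ZtConv n z₂ z₁ := by
  rw [ZtConv, ← Finset.Nat.sum_antidiagonal_swap]
  exact Finset.sum_congr rfl fun _ _ => mul_comm _ _

lemma Zt_le_ZtConv (n : ℕ) {z₁ z₂ : ℝ} (h₁ : 0 < z₁) (h₂ : 0 < z₂) :
    Zt n z₁ ≤ ZtConv n z₁ z₂ := by
  simpa [ZtConv, Zt_zero] using Finset.single_le_sum (f := fun p : ℕ × ℕ => Zt p.1 z₁ * Zt p.2 z₂)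
    (s := antidiagonal n) (a := (n, 0))
    (fun p _ => (mul_pos (Zt_pos p.1 h₁) (Zt_pos p.2 h₂)).le) (by simp)

lemma ZtConv_pos (n : ℕ) {z₁ z₂ : ℝ} (h₁ : 0 < z₁) (h₂ : 0 < z₂) : 0 < ZtConv n z₁ z₂ :=
  (Zt_pos n h₁).trans_le (Zt_le_ZtConv n h₁ h₂)

lemma exists_ZtConv_le_mul_catalan {z₁ z₂ : ℝ} (h₁ : 1 / 2 < z₁) (h₂ : 1 / 2 < z₂) :
    ∃ K : ℝ, ∀ n, ZtConv n z₁ z₂ ≤ K * catalan n := by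
  obtain ⟨K, hK⟩ := exists_Zt_le_mul_catalan h₁
  obtain ⟨L, hL⟩ := exists_Zt_le_mul_catalan h₂
  have hK0 : 0 ≤ K := zero_le_one.trans (by simpa [Zt_zero] using hK 0)
  have hL0 : 0 ≤ L := zero_le_one.trans (by simpa [Zt_zero] using hL 0)
  refine ⟨K * L * 4, fun n => ?_⟩
  calc ZtConv n z₁ z₂
      ≤ ∑ p ∈ antidiagonal n, K * catalan p.1 * (L * catalan p.2) :=
        Finset.sum_le_sum fun p _ =>
          mul_le_mul (hK p.1) (hL p.2) (Zt_pos p.2 (by linarith)).le (by positivity)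
    _ = K * L * catalan (n + 1) := by
        rw [catalan_succ', Nat.cast_sum, Finset.mul_sum]
        refine Finset.sum_congr rfl fun p _ => ?_
        push_cast
        ring
    _ ≤ K * L * (4 * catalan n) := by
        gcongr
        exact_mod_cast catalan_succ_le n
    _ = K * L * 4 * catalan n := by ring

lemma exists_tendsto_ZtConv_mul_pow {z₁ z₂ : ℝ} (h₁ : 0 < z₁) (h₁_half : z₁ < 1 / 2)
    (h₁₂ : z₁ < z₂) :
    ∃ B ≠ 0, Tendsto (fun n => ZtConv n z₁ z₂ * (z₁ * (1 - z₁)) ^ n) atTop (nhds B) := by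
  have hw : 0 < z₁ * (1 - z₁) := mul_pos h₁ (by linarith)
  have h_summable := summable_Zt_mul_pow h₁ h₁_half h₁₂
  have h_pos (n : ℕ) : 0 < Zt n z₂ * (z₁ * (1 - z₁)) ^ n :=
    mul_pos (Zt_pos n (h₁.trans h₁₂)) (by positivity)
  have h_limit_pos : 0 < (1 - 2 * z₁) / (1 - z₁) := div_pos (by linarith) (by linarith)
  have h_tsum_pos := h_summable.tsum_pos (fun n => (h_pos n).le) 0 (h_pos 0)
  refine ⟨_, (mul_pos h_limit_pos h_tsum_pos).ne',
    (tendsto_sum_antidiagonal_mul (tendsto_Zt_mul_pow h₁ h₁_half) h_summable.norm).congr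
      fun n => ?_⟩
  rw [ZtConv, Finset.sum_mul]
  refine Finset.sum_congr rfl fun p hp => ?_
  rw [← mem_antidiagonal.1 hp, pow_add]
  ring

end TwoSided

section Contact

variable {z₁ z₂ : ℝ}

lemma contactAbove_add (i j : ℕ) (h₁ : z₁ ≠ 0) (h₂ : z₂ ≠ 0) :
    contactAbove (i + j) i z₁ z₂ = Zt i z₁ * ZtConv j z₁ z₂ / ZtConv (i + j) z₁ z₂ := by
  rw [contactAbove, Nat.add_sub_cancel_left, Zfull_eq_pow_mul_ZtConv, Zfull_eq_pow_mul_ZtConv,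
    ← mul_div_mul_left _ (ZtConv (i + j) z₁ z₂) (pow_ne_zero (i + j) (mul_ne_zero h₁ h₂)), pow_add]
  ring

lemma contactBelow_add (i j : ℕ) (z₁ z₂ : ℝ) :
    contactBelow (i + j) i z₁ z₂ = contactAbove (j + i) j z₂ z₁ := by
  have Zfull_comm (n : ℕ) : Zfull n z₁ z₂ = Zfull n z₂ z₁ := by
    rw [Zfull_eq_pow_mul_ZtConv, Zfull_eq_pow_mul_ZtConv, ZtConv_comm, mul_comm z₁ z₂]
  rw [contactBelow, contactAbove, Nat.add_sub_cancel_left, Nat.add_sub_cancel_left, Zfull_comm,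
    Zfull_comm, mul_comm z₁ z₂, add_comm i j]
  ring

lemma tendsto_contactAbove_of_half_lt (h₁ : 1 / 2 < z₁) (h₂ : 1 / 2 < z₂) :
    Tendsto (fun p : ℕ × ℕ => contactAbove (p.1 + p.2) p.1 z₁ z₂) atTop (nhds 0) := by
  have h₁_pos : 0 < z₁ := by linarith
  have h₂_pos : 0 < z₂ := by linarith
  obtain ⟨K, hK⟩ := exists_Zt_le_mul_catalan h₁
  obtain ⟨L, hL⟩ := exists_ZtConv_le_mul_catalan h₁ h₂
  obtain ⟨c, hc, h_lower⟩ := exists_mul_catalan_le_Zt h₁_pos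
  have hK0 : 0 ≤ K := zero_le_one.trans (by simpa [Zt_zero] using hK 0)
  refine squeeze_zero (fun p => ?_) (fun p => ?_)
    (by simpa using tendsto_catalan_mul_catalan_div.const_mul (K * L / c))
  · rw [contactAbove_add _ _ h₁_pos.ne' h₂_pos.ne']
    exact div_nonneg (mul_pos (Zt_pos _ h₁_pos) (ZtConv_pos _ h₁_pos h₂_pos)).le
      (ZtConv_pos _ h₁_pos h₂_pos).le
  · have h_num : Zt p.1 z₁ * ZtConv p.2 z₁ z₂ ≤ K * catalan p.1 * (L * catalan p.2) :=
      mul_le_mul (hK p.1) (hL p.2) (ZtConv_pos p.2 h₁_pos h₂_pos).le (by positivity)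
    have h_den : c * catalan (p.1 + p.2) ≤ ZtConv (p.1 + p.2) z₁ z₂ :=
      (h_lower _).trans (Zt_le_ZtConv _ h₁_pos h₂_pos)
    have h_catalan : (0 : ℝ) < catalan (p.1 + p.2) := by exact_mod_cast catalan_pos _
    calc contactAbove (p.1 + p.2) p.1 z₁ z₂
        = Zt p.1 z₁ * ZtConv p.2 z₁ z₂ / ZtConv (p.1 + p.2) z₁ z₂ :=
          contactAbove_add _ _ h₁_pos.ne' h₂_pos.ne'
      _ ≤ K * catalan p.1 * (L * catalan p.2) / (c * catalan (p.1 + p.2)) :=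
          div_le_div₀ ((mul_pos (Zt_pos _ h₁_pos) (ZtConv_pos _ h₁_pos h₂_pos)).le.trans h_num)
            h_num (by positivity) h_den
      _ = K * L / c * (catalan p.1 * catalan p.2 / catalan (p.1 + p.2)) := by
          rw [div_mul_div_comm]
          ring

lemma tendsto_contactAbove_of_tendsto_ZtConv {w α B : ℝ} (h₁ : z₁ ≠ 0) (h₂ : z₂ ≠ 0) (hw : w ≠ 0)
    (hα : Tendsto (fun n => Zt n z₁ * w ^ n) atTop (nhds α)) (hB0 : B ≠ 0)
    (hB : Tendsto (fun n => ZtConv n z₁ z₂ * w ^ n) atTop (nhds B)) :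
    Tendsto (fun p : ℕ × ℕ => contactAbove (p.1 + p.2) p.1 z₁ z₂) atTop (nhds α) := by
  have h_fst : Tendsto (Prod.fst : ℕ × ℕ → ℕ) atTop atTop := by
    rw [← prod_atTop_atTop_eq]
    exact tendsto_fst
  have h_snd : Tendsto (Prod.snd : ℕ × ℕ → ℕ) atTop atTop := by
    rw [← prod_atTop_atTop_eq]
    exact tendsto_snd
  have h_ratio := ((hα.comp h_fst).mul (hB.comp h_snd)).div
    (hB.comp (h_fst.atTop_add_atTop h_snd)) hB0
  rw [mul_div_cancel_right₀ α hB0] at h_ratio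
  refine h_ratio.congr fun p => ?_
  rw [contactAbove_add _ _ h₁ h₂,
    ← mul_div_mul_right _ (ZtConv (p.1 + p.2) z₁ z₂) (pow_ne_zero (p.1 + p.2) hw)]
  simp only [Function.comp_apply, Pi.div_apply, pow_add]
  ring

lemma tendsto_contactAbove_of_lt (h₁ : 0 < z₁) (h₁_half : z₁ < 1 / 2) (h₁₂ : z₁ < z₂) :
    Tendsto (fun p : ℕ × ℕ => contactAbove (p.1 + p.2) p.1 z₁ z₂) atTop
      (nhds ((1 - 2 * z₁) / (1 - z₁))) := by
  obtain ⟨B, hB0, hB⟩ := exists_tendsto_ZtConv_mul_pow h₁ h₁_half h₁₂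
  have hw : z₁ * (1 - z₁) ≠ 0 := (mul_pos h₁ (by linarith)).ne'
  exact tendsto_contactAbove_of_tendsto_ZtConv h₁.ne' (h₁.trans h₁₂).ne' hw
    (tendsto_Zt_mul_pow h₁ h₁_half) hB0 hB

lemma tendsto_contactAbove_of_gt (h₂ : 0 < z₂) (h₂_half : z₂ < 1 / 2) (h₂₁ : z₂ < z₁) :
    Tendsto (fun p : ℕ × ℕ => contactAbove (p.1 + p.2) p.1 z₁ z₂) atTop (nhds 0) := by
  obtain ⟨B, hB0, hB⟩ := exists_tendsto_ZtConv_mul_pow h₂ h₂_half h₂₁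
  have hw : z₂ * (1 - z₂) ≠ 0 := (mul_pos h₂ (by linarith)).ne'
  simp_rw [ZtConv_comm _ z₂ z₁] at hB
  exact tendsto_contactAbove_of_tendsto_ZtConv (h₂.trans h₂₁).ne' h₂.ne' hw
    (summable_Zt_mul_pow h₂ h₂_half h₂₁).tendsto_atTop_zero hB0 hB

lemma tendsto_contactAbove_and_contactBelow {α β : ℝ} {ι : Type*} {l : Filter ι} {n i : ι → ℕ}
    (hα : Tendsto (fun p : ℕ × ℕ => contactAbove (p.1 + p.2) p.1 z₁ z₂) atTop (nhds α))
    (hβ : Tendsto (fun p : ℕ × ℕ => contactAbove (p.1 + p.2) p.1 z₂ z₁) atTop (nhds β))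
    (hi : Tendsto i l atTop) (hni : Tendsto (fun a => n a - i a) l atTop) :
    Tendsto (fun a => contactAbove (n a) (i a) z₁ z₂) l (nhds α) ∧
      Tendsto (fun a => contactBelow (n a) (i a) z₁ z₂) l (nhds β) := by
  have h_add : ∀ᶠ a in l, i a + (n a - i a) = n a := by
    filter_upwards [hni.eventually_gt_atTop 0] with a ha
    lia
  rw [← prod_atTop_atTop_eq] at hα hβ
  refine ⟨(hα.comp (hi.prodMk hni)).congr' ?_, (hβ.comp (hni.prodMk hi)).congr' ?_⟩
  · filter_upwards [h_add] with a ha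
    simp only [Function.comp_apply, ha]
  · filter_upwards [h_add] with a ha
    simp only [Function.comp_apply, ← contactBelow_add, ha]

end Contact

section Floor

variable {x : ℝ}

lemma tendsto_floor_mul_atTop (hx : 0 < x) :
    Tendsto (fun n : ℕ => ⌊x * n⌋₊) atTop atTop :=
  tendsto_nat_floor_atTop.comp (tendsto_natCast_atTop_atTop.const_mul_atTop hx)

lemma tendsto_sub_floor_mul_atTop (hx0 : 0 ≤ x) (hx1 : x < 1) :
    Tendsto (fun n : ℕ => n - ⌊x * n⌋₊) atTop atTop := by
  rw [← tendsto_natCast_atTop_iff (R := ℝ)]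
  refine tendsto_atTop_mono (fun n => ?_)
    (tendsto_natCast_atTop_atTop.const_mul_atTop (sub_pos.2 hx1))
  have h_floor : (⌊x * n⌋₊ : ℝ) ≤ x * n := Nat.floor_le (by positivity)
  have h_sub : (n : ℝ) - ⌊x * n⌋₊ ≤ (n - ⌊x * n⌋₊ : ℕ) := by
    rw [sub_le_iff_le_add]
    exact_mod_cast le_tsub_add
  linarith

end Floor

theorem local_contact_probabilities_general {z₁ z₂ : ℝ} (h₁ : 0 < z₁) (h₂ : 0 < z₂) {ι : Type*}
    {l : Filter ι} {n i : ι → ℕ} (hi : Tendsto i l atTop)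
    (hni : Tendsto (fun a => n a - i a) l atTop) :
    (1 / 2 < z₁ → 1 / 2 < z₂ →
      Tendsto (fun a => contactAbove (n a) (i a) z₁ z₂) l (nhds 0) ∧
      Tendsto (fun a => contactBelow (n a) (i a) z₁ z₂) l (nhds 0)) ∧
    (z₁ < 1 / 2 → z₁ < z₂ →
      Tendsto (fun a => contactAbove (n a) (i a) z₁ z₂) l (nhds ((1 - 2 * z₁) / (1 - z₁))) ∧
      Tendsto (fun a => contactBelow (n a) (i a) z₁ z₂) l (nhds 0)) ∧
    (z₂ < 1 / 2 → z₂ < z₁ →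
      Tendsto (fun a => contactAbove (n a) (i a) z₁ z₂) l (nhds 0) ∧
      Tendsto (fun a => contactBelow (n a) (i a) z₁ z₂) l
        (nhds ((1 - 2 * z₂) / (1 - z₂)))) :=
  ⟨fun h₁_half h₂_half => tendsto_contactAbove_and_contactBelow
    (tendsto_contactAbove_of_half_lt h₁_half h₂_half)
    (tendsto_contactAbove_of_half_lt h₂_half h₁_half) hi hni,
  fun h₁_half h₁₂ => tendsto_contactAbove_and_contactBelow
    (tendsto_contactAbove_of_lt h₁ h₁_half h₁₂) (tendsto_contactAbove_of_gt h₁ h₁_half h₁₂) hi hni,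
  fun h₂_half h₂₁ => tendsto_contactAbove_and_contactBelow
    (tendsto_contactAbove_of_gt h₂ h₂_half h₂₁) (tendsto_contactAbove_of_lt h₂ h₂_half h₂₁) hi hni⟩

/-- In the thermodynamic limit with i = ⌊xn⌋, the local contact probabilities
(⟨â_x⟩, ⟨b̂_x⟩) converge to (0,0), (ρ(z₁),0) or (0,ρ(z₂)) in the three phases,
where ρ(z) = (1-2z)/(1-z). -/
theorem local_contact_probabilities (z₁ z₂ x : ℝ) (h1 : 0 < z₁) (h2 : 0 < z₂)
    (hx0 : 0 < x) (hx1 : x < 1) :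
    (1 / 2 < z₁ → 1 / 2 < z₂ →
      Tendsto (fun n : ℕ => contactAbove n ⌊x * n⌋₊ z₁ z₂) atTop (nhds 0) ∧
      Tendsto (fun n : ℕ => contactBelow n ⌊x * n⌋₊ z₁ z₂) atTop (nhds 0)) ∧
    (z₁ < 1 / 2 → z₁ < z₂ →
      Tendsto (fun n : ℕ => contactAbove n ⌊x * n⌋₊ z₁ z₂) atTop
        (nhds ((1 - 2 * z₁) / (1 - z₁))) ∧
      Tendsto (fun n : ℕ => contactBelow n ⌊x * n⌋₊ z₁ z₂) atTop (nhds 0)) ∧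
    (z₂ < 1 / 2 → z₂ < z₁ →
      Tendsto (fun n : ℕ => contactAbove n ⌊x * n⌋₊ z₁ z₂) atTop (nhds 0) ∧
      Tendsto (fun n : ℕ => contactBelow n ⌊x * n⌋₊ z₁ z₂) atTop
        (nhds ((1 - 2 * z₂) / (1 - z₂)))) := by
  exact local_contact_probabilities_general h1 h2 (tendsto_floor_mul_atTop hx0)
    (tendsto_sub_floor_mul_atTop hx0.le hx1)
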